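/- Let M_1 = (V, I_1), …, M_k = (V, I_k) be k matroids over a common finite ground set V, let (S_1, …, S_k) be a partition of S ⊆ V with S_i ∈ I_i for all i ∈ [k], and let s, v₁, …, v_{l−1}, t_j be a shortest (s, T)-path in the compressed exchange graph G(S_1, …, S_k) (so v₁ ∈ V \ S and v₂, …, v_{l−1} ∈ S). For v ∈ S let π(v) be the index with v ∈ S_{π(v)}. Define (S'_1, …, S'_k) from (S_1, …, S_k) by setting, for each a = 1, …, l−2, S'_{π(v_{a+1})} := S_{π(v_{a+1})} + v_a − v_{a+1} (leaving other parts unchanged by these steps), and finally adding v_{l−1} to the part with index j. Then S'_i ∈ I_i for all i ∈ [k] and (S'_1, …, S'_k) is a partition of S + v₁. -/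

import Mathlib

/-- A matroid on a finite ground set `V`, given by its family of independent sets. -/
structure FinMatroid (V : Type*) [DecidableEq V] [Fintype V] where
  Indep : Finset V → Prop
  indep_empty : Indep ∅
  indep_subset : ∀ ⦃S T : Finset V⦄, Indep S → T ⊆ S → Indep T
  indep_aug : ∀ ⦃S T : Finset V⦄, Indep S → Indep T → T.card < S.card →
    ∃ x ∈ S \ T, Indep (insert x T)

/-- `S` is partitionable w.r.t. the matroids `M i`: it can be partitioned into
sets `P i` with `P i` independent in `M i`. -/
def Partitionable {V ι : Type*} [DecidableEq V] [Fintype V] [DecidableEq ι] [Fintype ι]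
    (M : ι → FinMatroid V) (S : Finset V) : Prop :=
  ∃ P : ι → Finset V, (∀ i, (M i).Indep (P i)) ∧
    (∀ i j, i ≠ j → Disjoint (P i) (P j)) ∧ Finset.univ.biUnion P = S

/-- `reachIn Adj n x y` : there is a directed walk with exactly `n` edges from `x` to `y`. -/
def reachIn {α : Type*} (Adj : α → α → Prop) : ℕ → α → α → Prop
  | 0, x, y => x = y
  | n + 1, x, y => ∃ z, Adj x z ∧ reachIn Adj n z y

/-- Distance (number of edges of a shortest directed path) from `x` to `y`; `⊤` if none. -/
noncomputable def ddist {α : Type*} (Adj : α → α → Prop) (x y : α) : ℕ∞ :=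
  sInf {n : ℕ∞ | ∃ m : ℕ, n = (m : ℕ∞) ∧ reachIn Adj m x y}

/-- Vertices of the compressed exchange graph: ground elements, a source `src`,
and one sink `snk i` for each index `i`. -/
inductive CVert (V ι : Type*) where
  | elt : V → CVert V ι
  | src : CVert V ι
  | snk : ι → CVert V ι

/-- The compressed exchange graph `G(S₁, …, S_k)` relative to the partition `P`. -/
def compAdj {V ι : Type*} [DecidableEq V] [Fintype V] [DecidableEq ι] [Fintype ι]
    (M : ι → FinMatroid V) (P : ι → Finset V) : CVert V ι → CVert V ι → Prop
  | CVert.elt v, CVert.elt u =>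
      ∃ i, u ∈ P i ∧ ¬ (M i).Indep (insert v (P i)) ∧
        (M i).Indep (insert v ((P i).erase u))
  | CVert.src, CVert.elt v => v ∉ Finset.univ.biUnion P
  | CVert.elt v, CVert.snk i => v ∉ P i ∧ (M i).Indep (insert v (P i))
  | _, _ => False

/-- The result of the procedure `Update`: augmenting the partition `P` along the path
`s, v₁, …, v_{l−1}, t_j` (where `π` gives the index of the part containing each element):
for `a = 1, …, l−2` the part of `v_{a+1}` gets `+ v_a − v_{a+1}`, and finally `v_{l−1}`
is added to part `j`. -/
def updatePartition {V ι : Type*} [DecidableEq V] [DecidableEq ι]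
    (P : ι → Finset V) (π : V → ι) (vs : List V) (hne : vs ≠ []) (j : ι) :
    ι → Finset V := fun i =>
  ((P i) \ (vs.tail.filter (fun v => π v = i)).toFinset)
    ∪ (((vs.zip vs.tail).filter (fun p => π p.2 = i)).map Prod.fst).toFinset
    ∪ (if i = j then {vs.getLast hne} else ∅)

theorem fm_K {V : Type*} [DecidableEq V] [Fintype V] (M : FinMatroid V) (I : Finset V) (x u w : V)
    (hI : M.Indep I) (hu : u ∈ I) (hw : w ∈ I) (huw : u ≠ w) (hx : x ∉ I)
    (h1 : ¬ M.Indep (insert x (I.erase u))) (h2 : ¬ M.Indep (insert x (I.erase w))) :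
    ¬ M.Indep (insert x ((I.erase u).erase w)) := by
  intro h
  have hw' : w ∈ I.erase u := Finset.mem_erase.2 ⟨huw.symm, hw⟩
  have hc1 := Finset.card_erase_add_one hw'
  have hc2 := Finset.card_erase_add_one hu
  have hc3 := Finset.card_insert_le x ((I.erase u).erase w)
  obtain ⟨e, he, hi⟩ := M.indep_aug hI h (by omega)
  have : e = u ∨ e = w := by grind
  rcases this with rfl | rfl
  · exact h2 (M.indep_subset hi (by intro y; grind))
  · exact h1 (M.indep_subset hi (by intro y; grind))

theorem fm_L {V : Type*} [DecidableEq V] [Fintype V] (M : FinMatroid V) (L : List (V × V)) :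
    ∀ (P : Finset V), M.Indep P →
    (∀ p ∈ L, p.2 ∈ P ∧ M.Indep (insert p.1 (P.erase p.2)) ∧ ¬ M.Indep (insert p.1 P)) →
    L.Pairwise (fun p q => ¬ M.Indep (insert q.1 (P.erase p.2))) →
    M.Indep ((P \ (L.map Prod.snd).toFinset) ∪ (L.map Prod.fst).toFinset) := by
  induction L with
  | nil => intro P hP _ _; simpa using hP
  | cons p L ih =>
    obtain ⟨x, y⟩ := p
    intro P hP hL hpw
    rw [List.pairwise_cons] at hpw
    obtain ⟨hp1, hp2⟩ := hpw
    obtain ⟨hy, hxy, hxd⟩ := hL (x, y) (by simp)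
    simp only at hy hxy hxd hp1
    have hxP : x ∉ P := fun h => hxd (by rwa [Finset.insert_eq_of_mem h])
    have hne : ∀ q ∈ L, q.2 ≠ y := by
      intro q hq h
      have := (hL q (by simp [hq])).2.1
      rw [h] at this
      exact hp1 q hq this
    have hqP : ∀ q ∈ L, q.1 ∉ P := fun q hq h =>
      (hL q (by simp [hq])).2.2 (by rwa [Finset.insert_eq_of_mem h])
    have key := ih (insert x (P.erase y)) hxy ?_ ?_
    · refine M.indep_subset key ?_
      have hxL : ∀ q ∈ L, q.2 ≠ x := fun q hq h => hxP (h ▸ (hL q (by simp [hq])).1)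
      intro e he
      simp only [List.map_cons, List.toFinset_cons, Finset.mem_union, Finset.mem_sdiff,
        Finset.mem_insert, List.mem_toFinset, List.mem_map, Finset.mem_erase] at he ⊢
      rcases he with ⟨h1, h2⟩ | rfl | h
      · left; exact ⟨Or.inr ⟨fun h => h2 (Or.inl h), h1⟩, fun h => h2 (Or.inr h)⟩
      · left; exact ⟨Or.inl rfl, fun ⟨q, hq, h⟩ => hxL q hq h⟩
      · right; exact h
    · intro q hq
      obtain ⟨a1, a2, a3⟩ := hL q (by simp [hq])
      refine ⟨by have := hne q hq; grind, ?_, ?_⟩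
      · by_contra hcon
        have hqx : q.1 ≠ x := by
          intro h
          apply hp1 q hq
          rw [h]; exact hxy
        have h2ne : x ≠ q.2 := fun h => hxP (h ▸ a1)
        refine fm_K M (insert x (P.erase y)) q.1 x q.2 hxy (by simp) ?_ h2ne ?_ ?_ hcon ?_
        · have := hne q hq; grind
        · have := hqP q hq; grind
        · intro h
          exact hp1 q hq (M.indep_subset h (by intro e; grind))
        · exact M.indep_subset a2 (by intro e; grind)
      · intro h
        exact hp1 q hq (M.indep_subset h (by intro e; grind))
    · refine hp2.imp_of_mem ?_
      intro q r hq hr hqr h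
      have := fm_K M P r.1 y q.2 hP hy (hL q (by simp [hq])).1 (hne q hq).symm (hqP r hr)
        (hp1 r hr) hqr
      exact this (M.indep_subset h (by intro e; grind))

theorem reachIn_trans' {α : Type*} (Adj : α → α → Prop) (m n : ℕ) : ∀ x y z,
    reachIn Adj m x y → reachIn Adj n y z → reachIn Adj (m + n) x z := by
  induction m with
  | zero => intro x y z h1 h2; cases h1; simpa using h2
  | succ m ih =>
    rintro x y z ⟨w, hw, h1⟩ h2
    rw [Nat.succ_add]
    exact ⟨w, hw, ih _ _ _ h1 h2⟩

theorem reachIn_one' {α : Type*} (Adj : α → α → Prop) (x y) (h : Adj x y) :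
    reachIn Adj 1 x y := ⟨y, h, rfl⟩

/-- Correctness of `Update`: augmenting along a shortest `(s,T)`-path of the compressed
exchange graph produces a partition of `S + v₁` into independent sets. -/
theorem update_correct {V ι : Type*} [DecidableEq V] [Fintype V]
    [DecidableEq ι] [Fintype ι] (M : ι → FinMatroid V) (P : ι → Finset V) (S : Finset V)
    (hind : ∀ i, (M i).Indep (P i)) (hdisj : ∀ i j, i ≠ j → Disjoint (P i) (P j))
    (hS : Finset.univ.biUnion P = S)
    (π : V → ι) (hπ : ∀ i, ∀ v ∈ P i, π v = i)
    (j : ι) (vs : List V) (hne : vs ≠ []) (hnd : vs.Nodup)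
    (hchain : List.Chain' (compAdj M P)
      (CVert.src :: (vs.map CVert.elt ++ [CVert.snk j])))
    (hshort : (⨅ i : ι, ddist (compAdj M P) CVert.src (CVert.snk i))
      = ((vs.length + 1 : ℕ) : ℕ∞)) :
    (∀ i, (M i).Indep (updatePartition P π vs hne j i)) ∧
    (∀ i i', i ≠ i' →
      Disjoint (updatePartition P π vs hne j i) (updatePartition P π vs hne j i')) ∧
    Finset.univ.biUnion (updatePartition P π vs hne j) = insert (vs.head hne) S := by
  classical
  have hn0 : 0 < vs.length := List.length_pos_iff.2 hne
  have hch := List.isChain_iff_getElem.1 hchain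
  have hsrc : vs[0] ∉ Finset.univ.biUnion P := by
    have := hch 0 (by simp)
    simp only [List.getElem_cons_zero, List.getElem_cons_succ] at this
    rw [List.getElem_append_left (by simpa using hn0)] at this
    simpa [compAdj] using this
  have hstep : ∀ a (h : a + 1 < vs.length),
      compAdj M P (CVert.elt vs[a]) (CVert.elt vs[a+1]) := by
    intro a h
    have := hch (a+1) (by simp; omega)
    simp only [List.getElem_cons_succ] at this
    rw [List.getElem_append_left (by simp; omega),
      List.getElem_append_left (by simp; omega)] at this
    simpa using this
  have hsnk : compAdj M P (CVert.elt (vs[vs.length - 1]'(by omega))) (CVert.snk j) := by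
    obtain ⟨n, hn⟩ : ∃ n, vs.length = n + 1 := ⟨vs.length - 1, by omega⟩
    have := hch (n+1) (by simp; omega)
    simp only [List.getElem_cons_succ] at this
    rw [List.getElem_append_left (by simp; omega),
      List.getElem_append_right (by simp; omega)] at this
    simpa [hn] using this
  have hmin : ∀ m i, reachIn (compAdj M P) m CVert.src (CVert.snk i) → vs.length + 1 ≤ m := by
    intro m i h
    have h1 : ddist (compAdj M P) CVert.src (CVert.snk i) ≤ (m : ℕ∞) := sInf_le ⟨m, rfl, h⟩
    have h2 := (iInf_le (fun i : ι => ddist (compAdj M P) CVert.src (CVert.snk i)) i).trans h1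
    rw [hshort] at h2
    exact_mod_cast h2
  have hfrom : ∀ a (h : a < vs.length), reachIn (compAdj M P) (a+1) CVert.src (CVert.elt vs[a]) := by
    intro a
    induction a with
    | zero => intro h; exact reachIn_one' (compAdj M P) CVert.src (CVert.elt vs[0]) hsrc
    | succ a ih => intro h; exact reachIn_trans' _ _ _ _ _ _ (ih (by omega)) (reachIn_one' _ _ _ (hstep a h))
  have hto : ∀ d a (h : a < vs.length), a + d + 1 = vs.length →
      reachIn (compAdj M P) (d+1) (CVert.elt vs[a]) (CVert.snk j) := by
    intro d
    induction d with
    | zero =>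
      intro a h h'
      have : a = vs.length - 1 := by omega
      subst this
      exact reachIn_one' _ _ _ hsnk
    | succ d ih =>
      intro a h h'
      exact ⟨_, hstep a (by omega), ih (a+1) (by omega) (by omega)⟩
  have hsc1 : ∀ a b (ha : a < vs.length) (hb : b < vs.length),
      compAdj M P (CVert.elt vs[a]) (CVert.elt vs[b]) → b ≤ a + 1 := by
    intro a b ha hb h
    have h1 := reachIn_trans' _ _ _ _ _ _ (reachIn_trans' _ _ _ _ _ _ (hfrom a ha) (reachIn_one' _ _ _ h))
      (hto (vs.length - 1 - b) b hb (by omega))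
    have := hmin _ _ h1
    omega
  -- part data
  have hpart : ∀ a (h : a + 1 < vs.length), vs[a+1] ∈ P (π vs[a+1]) ∧
      ¬ (M (π vs[a+1])).Indep (insert vs[a] (P (π vs[a+1]))) ∧
      (M (π vs[a+1])).Indep (insert vs[a] ((P (π vs[a+1])).erase vs[a+1])) := by
    intro a h
    obtain ⟨i, h1, h2, h3⟩ := hstep a h
    rw [hπ i _ h1]
    exact ⟨h1, h2, h3⟩
  have hlast : vs.getLast hne = vs[vs.length - 1] := List.getLast_eq_getElem hne
  have hzmem : ∀ p, p ∈ vs.zip vs.tail ↔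
      ∃ a, ∃ h : a + 1 < vs.length, p = (vs[a], vs[a+1]) := by
    intro p
    rw [List.mem_iff_getElem]
    constructor
    · rintro ⟨a, h, rfl⟩
      simp at h
      exact ⟨a, by omega, by simp⟩
    · rintro ⟨a, h, rfl⟩
      exact ⟨a, by simp; omega, by simp⟩
  have htmem : ∀ x, x ∈ vs.tail ↔ ∃ a, ∃ h : a + 1 < vs.length, x = vs[a+1] := by
    intro x
    rw [List.mem_iff_getElem]
    constructor
    · rintro ⟨a, h, rfl⟩
      simp at h
      exact ⟨a, by omega, by simp⟩
    · rintro ⟨a, h, rfl⟩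
      exact ⟨a, by simp; omega, by simp⟩
  have hmem : ∀ i x, x ∈ updatePartition P π vs hne j i ↔
      (x ∈ P i ∧ ¬ (x ∈ vs.tail ∧ π x = i)) ∨
      (∃ a, ∃ h : a + 1 < vs.length, x = vs[a] ∧ π vs[a+1] = i) ∨
      (i = j ∧ x = vs[vs.length - 1]) := by
    intro i x
    unfold updatePartition
    rw [Finset.mem_union, Finset.mem_union, or_assoc]
    refine or_congr ?_ (or_congr ?_ ?_)
    · simp
    · simp only [List.mem_toFinset, List.mem_map, List.mem_filter, hzmem, decide_eq_true_eq]
      constructor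
      · rintro ⟨_, ⟨⟨a, h, rfl⟩, h2⟩, rfl⟩
        exact ⟨a, h, rfl, h2⟩
      · rintro ⟨a, h, rfl, h2⟩
        exact ⟨_, ⟨⟨a, h, rfl⟩, h2⟩, rfl⟩
    · split_ifs with hij <;> simp [hij, hlast]
  have hinj : ∀ a b (ha : a < vs.length) (hb : b < vs.length), vs[a] = vs[b] → a = b :=
    fun a b ha hb h => (List.Nodup.getElem_inj_iff hnd).1 h
  -- elements of the path
  have hpm : ∀ i a (ha : a < vs.length), vs[a] ∈ updatePartition P π vs hne j i ↔
      (∃ h : a + 1 < vs.length, π vs[a+1] = i) ∨ (i = j ∧ a = vs.length - 1) := by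
    intro i a ha
    rw [hmem]
    constructor
    · rintro (⟨h1, h2⟩ | ⟨b, hb, h1, h2⟩ | ⟨h1, h2⟩)
      · exfalso
        apply h2
        refine ⟨?_, hπ _ _ h1⟩
        rcases a with _ | a
        · exact absurd (Finset.mem_biUnion.2 ⟨i, Finset.mem_univ _, h1⟩) hsrc
        · exact (htmem _).2 ⟨a, ha, rfl⟩
      · have := hinj _ _ _ _ h1
        subst this
        exact Or.inl ⟨hb, h2⟩
      · exact Or.inr ⟨h1, hinj _ _ _ _ h2⟩
    · rintro (⟨h, h2⟩ | ⟨h1, h2⟩)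
      · exact Or.inr (Or.inl ⟨a, h, rfl, h2⟩)
      · subst h2
        exact Or.inr (Or.inr ⟨h1, rfl⟩)
  have hpn : ∀ i x, x ∉ vs → (x ∈ updatePartition P π vs hne j i ↔ x ∈ P i) := by
    intro i x hx
    rw [hmem]
    constructor
    · rintro (⟨h1, h2⟩ | ⟨b, hb, h1, h2⟩ | ⟨h1, h2⟩)
      · exact h1
      · exact absurd (h1 ▸ List.getElem_mem _) hx
      · exact absurd (h2 ▸ List.getElem_mem _) hx
    · intro h
      exact Or.inl ⟨h, fun h' => hx (List.mem_of_mem_tail h'.1)⟩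
  refine ⟨?_, ?_, ?_⟩
  · intro i
    -- general application of the exchange lemma
    have hgen : ∀ Q : Finset V, (M i).Indep Q → P i ⊆ Q →
        (∀ a (h : a + 1 < vs.length), π vs[a+1] = i →
          (M i).Indep (insert vs[a] (Q.erase vs[a+1]))) →
        (M i).Indep ((Q \ (((vs.zip vs.tail).filter (fun p => π p.2 = i)).map Prod.snd).toFinset) ∪
          (((vs.zip vs.tail).filter (fun p => π p.2 = i)).map Prod.fst).toFinset) := by
      intro Q hQ hPQ hQe
      have := fm_L (M i) ((vs.zip vs.tail).filter (fun p => π p.2 = i)).reverse Q hQ ?_ ?_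
      · simpa using this
      · intro p hp
        simp only [List.mem_reverse, List.mem_filter, hzmem, decide_eq_true_eq] at hp
        obtain ⟨⟨a, h, rfl⟩, h2⟩ := hp
        simp only at h2
        obtain ⟨b1, b2, b3⟩ := hpart a h
        rw [h2] at b1 b2 b3
        refine ⟨hPQ b1, hQe a h h2, fun hh => b2 ((M i).indep_subset hh ?_)⟩
        exact Finset.insert_subset_insert _ hPQ
      · rw [List.pairwise_reverse, List.pairwise_filter, List.pairwise_iff_getElem]
        intro a b ha hb hab hpa hpb
        simp at ha hb
        simp only [List.getElem_zip, List.getElem_tail, decide_eq_true_eq] at hpa hpb ⊢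
        intro hh
        obtain ⟨a1, a2, a3⟩ := hpart a (by omega)
        obtain ⟨b1, b2, b3⟩ := hpart b (by omega)
        rw [hpa] at a2
        rw [hpb] at b1
        have := hsc1 a (b+1) (by omega) (by omega) ⟨i, b1, a2, (M i).indep_subset hh
          (Finset.insert_subset_insert _ (Finset.erase_subset_erase _ hPQ))⟩
        omega
    by_cases hij : i = j
    · subst hij
      obtain ⟨hz, hzi⟩ := hsnk
      refine (M i).indep_subset (hgen _ hzi (Finset.subset_insert _ _) ?_) ?_
      · intro a h h2
        obtain ⟨b1, b2, b3⟩ := hpart a h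
        rw [h2] at b1 b2 b3
        have hx : vs[a] ∉ P i := fun hh => b2 (by rw [Finset.insert_eq_of_mem hh]; exact hind i)
        have hc1 : (insert vs[a] ((P i).erase vs[a+1])).card < (insert vs[vs.length-1] (P i)).card := by
          rw [Finset.card_insert_of_notMem hz]
          have := Finset.card_insert_le vs[a] ((P i).erase vs[a+1])
          have := Finset.card_erase_add_one b1
          omega
        obtain ⟨e, he, hi⟩ := (M i).indep_aug hzi b3 hc1
        have : e = vs[vs.length-1] ∨ e = vs[a+1] := by grind
        rcases this with rfl | rfl
        · exact (M i).indep_subset hi (by intro y; grind)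
        · exact absurd ((M i).indep_subset hi (by intro y; grind)) b2
      · intro x hx
        rw [hmem] at hx
        simp only [Finset.mem_union, Finset.mem_sdiff, List.mem_toFinset, List.mem_map,
          List.mem_filter, hzmem, decide_eq_true_eq, Finset.mem_insert]
        rcases hx with ⟨h1, h2⟩ | ⟨b, hb, h1, h2⟩ | ⟨h1, h2⟩
        · left
          refine ⟨Or.inr h1, ?_⟩
          rintro ⟨_, ⟨⟨a, h, rfl⟩, h3⟩, rfl⟩
          exact h2 ⟨(htmem _).2 ⟨a, h, rfl⟩, h3⟩
        · right
          exact ⟨_, ⟨⟨b, hb, rfl⟩, h2⟩, h1.symm⟩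
        · left
          refine ⟨Or.inl h2, ?_⟩
          rintro ⟨_, ⟨⟨a, h, rfl⟩, h3⟩, rfl⟩
          simp only at h2 h3
          have := (hpart a h).1
          rw [h3, h2] at this
          exact hz this
    · refine (M i).indep_subset (hgen _ (hind i) subset_rfl ?_) ?_
      · intro a h h2
        obtain ⟨b1, b2, b3⟩ := hpart a h
        rwa [h2] at b3
      · intro x hx
        rw [hmem] at hx
        simp only [Finset.mem_union, Finset.mem_sdiff, List.mem_toFinset, List.mem_map,
          List.mem_filter, hzmem, decide_eq_true_eq]
        rcases hx with ⟨h1, h2⟩ | ⟨b, hb, h1, h2⟩ | ⟨h1, h2⟩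
        · left
          refine ⟨h1, ?_⟩
          rintro ⟨_, ⟨⟨a, h, rfl⟩, h3⟩, rfl⟩
          exact h2 ⟨(htmem _).2 ⟨a, h, rfl⟩, h3⟩
        · right
          exact ⟨_, ⟨⟨b, hb, rfl⟩, h2⟩, h1.symm⟩
        · exact absurd h1 hij
  · intro i i' hii
    rw [Finset.disjoint_left]
    intro x hx hx'
    by_cases hxv : x ∈ vs
    · obtain ⟨a, ha, rfl⟩ := List.mem_iff_getElem.1 hxv
      rw [hpm] at hx hx'
      rcases hx with ⟨h, h2⟩ | ⟨h1, h2⟩ <;> rcases hx' with ⟨h', h2'⟩ | ⟨h1', h2'⟩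
      · exact hii (h2.symm.trans h2')
      · omega
      · omega
      · exact hii (h1.trans h1'.symm)
    · rw [hpn _ _ hxv] at hx hx'
      exact Finset.disjoint_left.1 (hdisj i i' hii) hx hx'
  · ext x
    rw [Finset.mem_insert, ← hS, Finset.mem_biUnion, Finset.mem_biUnion, List.head_eq_getElem]
    by_cases hxv : x ∈ vs
    · obtain ⟨a, ha, rfl⟩ := List.mem_iff_getElem.1 hxv
      refine iff_of_true ?_ ?_
      · by_cases h : a + 1 < vs.length
        · exact ⟨_, Finset.mem_univ _, (hpm _ _ _).2 (Or.inl ⟨h, rfl⟩)⟩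
        · exact ⟨j, Finset.mem_univ _, (hpm _ _ _).2 (Or.inr ⟨rfl, by omega⟩)⟩
      · rcases a with _ | a
        · exact Or.inl rfl
        · exact Or.inr ⟨_, Finset.mem_univ _, (hpart a ha).1⟩
    · simp only [hpn _ _ hxv]
      refine ⟨Or.inr, fun h => h.resolve_left ?_⟩
      rintro rfl
      exact hxv (List.getElem_mem _)
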